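/- Let N ≥ 2 and let a_{ij} = a_{ji} ≥ 0 with a_{ii} = 0 define the Laplacian L with l_{ij} = −a_{ij} (i ≠ j) and l_{ii} = Σ_{j≠i} a_{ij}; assume L is positive semidefinite, L·𝟙 = 0, and vᵀLv ≥ λ₂‖v‖² for every v ∈ ℝ^N with 𝟙ᵀv = 0, where λ₂ > 0. Let the target move with constant velocity: p_T′(t) = v_T, v_T′(t) = 0, and let p_i : ℝ → ℝ³ be continuous agent positions with p_i(t) ≠ p_T(t) for all t ≥ t₀; set b_i(t) = (p_T(t) − p_i(t))/‖p_T(t) − p_i(t)‖ and Π_{b_i(t)} = I₃ − b_i(t)·b_i(t)ᵀ. Let the estimates satisfy p̂_i′(t) = v̂_i(t) + k₁·δ_i(t) and v̂_i′(t) = k₂·δ_i(t), where δ_i(t) = Π_{b_i(t)}·(p_i(t) − p̂_i(t)) − α·Σ_{j=1}^N a_{ij}·(p̂_i(t) − p̂_j(t)), with k₁, k₂ > 0. Suppose there exist δ > 0 and γ ∈ (0,1) such that for all t ≥ t₀, (1/N)·Σ_{i=1}^N Π_{b_i(t)} − ((δk₁ + k₂)/k₁² + γ)·I₃ is positive definite,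 and α > ((δk₁ + k₂)/k₁² + 1/γ − 1)/λ₂. Then there exist c > 0 and λ > 0 such that for all t ≥ t₀, Σ_{i=1}^N (‖p_T(t) − p̂_i(t)‖² + ‖v_T − v̂_i(t)‖²) ≤ c·exp(−2λ(t − t₀))·Σ_{i=1}^N (‖p_T(t₀) − p̂_i(t₀)‖² + ‖v_T − v̂_i(t₀)‖²). -/

import Mathlib

/-!
With the errors `x i = pT - phat i` and `y i = vT - vhat i`, and since each bearing projection
annihilates `pT - p i`, the observer error obeys `x' = y - k₁ Q x`, `y' = -k₂ Q x`, where
`Q = diag (Pr i) + α (L ⊗ I)` is symmetric and time varying.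

*Coercivity* (`coercive`). Put `κ = (δ k₁ + k₂) / k₁²`. Splitting `x` into its average `u` and a
zero-mean part `w`, a weighted Young inequality on the projection form (`projForm_add_ge`) gives
`xᵀ Q x ≥ (1 - γ) uᵀ (∑ Pr i) u - (1 / γ - 1) ‖w‖² + α λ₂ ‖w‖² ≥ κ ‖x‖²`. The first term is
controlled because excitation forces `κ + γ < 1`, whence `(1 - γ) (κ + γ) ≥ κ`.

*Lyapunov function*. With `r = k₂ / k₁` and `z = y - r x` one has `x' = z + r x - k₁ Q x` and
`z' = -r z - r² x`, so `Q` drops out of the second equation. For `V = ‖x‖² + ‖z‖² / r²` the cross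
terms cancel, and `k₁ κ = δ + r` gives `V' ≤ -2 δ ‖x‖² - (2 / r) ‖z‖² ≤ -2 (min δ r) V`. Then
`exp (2 (min δ r) (t - t₀)) V` is nonincreasing (`exp_decay`), and `V` is equivalent to
`‖x‖² + ‖y‖²`.
-/

open Matrix

/-- The quadratic form `vᵀ (I - b bᵀ) v`. -/
def projForm (b v : Fin 3 → ℝ) : ℝ := v ⬝ᵥ v - (b ⬝ᵥ v) ^ 2

lemma projForm_eq (b v : Fin 3 → ℝ) :
    v ⬝ᵥ ((1 - vecMulVec b b) *ᵥ v) = projForm b v := by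
  simp only [projForm, sub_mulVec, one_mulVec, dotProduct_sub, vecMulVec_mulVec]
  simp [dotProduct, Fin.sum_univ_three]
  ring

lemma projForm_nonneg (b v : Fin 3 → ℝ) (hb : b ⬝ᵥ b = 1) : 0 ≤ projForm b v := by
  simp only [projForm, dotProduct, Fin.sum_univ_three] at *
  -- Lagrange's identity, with `‖b‖ = 1`
  have h : v 0 * v 0 + v 1 * v 1 + v 2 * v 2 - (b 0 * v 0 + b 1 * v 1 + b 2 * v 2) ^ 2
      = (b 0 * v 1 - b 1 * v 0) ^ 2 + (b 0 * v 2 - b 2 * v 0) ^ 2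
        + (b 1 * v 2 - b 2 * v 1) ^ 2 := by
    linear_combination (-(v 0 * v 0 + v 1 * v 1 + v 2 * v 2)) * hb
  rw [h]; positivity

lemma projForm_le (b v : Fin 3 → ℝ) : projForm b v ≤ v ⬝ᵥ v := by
  simp only [projForm]; nlinarith [sq_nonneg (b ⬝ᵥ v)]

/-- Weighted Young inequality: the defect equals `γ⁻¹ * projForm b (γ • u + w)`. -/
lemma projForm_add_ge (b u w : Fin 3 → ℝ) (hb : b ⬝ᵥ b = 1) (γ : ℝ) (hγ : 0 < γ) :
    (1 - γ) * projForm b u + (1 - 1 / γ) * projForm b w ≤ projForm b (u + w) := by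
  have h := mul_nonneg (inv_nonneg.2 hγ.le) (projForm_nonneg b (γ • u + w) hb)
  have e : γ⁻¹ * projForm b (γ • u + w) = projForm b (u + w)
      - ((1 - γ) * projForm b u + (1 - 1 / γ) * projForm b w) := by
    simp only [projForm, dotProduct, Fin.sum_univ_three, Pi.add_apply, Pi.smul_apply, smul_eq_mul]
    field_simp
    ring
  linarith

lemma laplacian_form_shift {N : ℕ} (L : Matrix (Fin N) (Fin N) ℝ) (hLs : Lᵀ = L)
    (hL1 : L *ᵥ (fun _ => (1 : ℝ)) = 0) (c : ℝ) (w : Fin N → ℝ) :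
    (fun i => c + w i) ⬝ᵥ (L *ᵥ (fun i => c + w i)) = w ⬝ᵥ (L *ᵥ w) := by
  have e : (fun i => c + w i) = c • (fun _ => (1 : ℝ)) + w := by ext i; simp
  have e1 : (fun _ => (1 : ℝ)) ᵥ* L = 0 := by rw [← mulVec_transpose, hLs, hL1]
  rw [e, mulVec_add, mulVec_smul, hL1, smul_zero, zero_add, add_dotProduct, smul_dotProduct,
    dotProduct_mulVec (fun _ => (1 : ℝ)), e1, zero_dotProduct, smul_zero, zero_add]

/-- Coercivity of `diag (I - b i (b i)ᵀ) + α (L ⊗ I)` with constant `κ`. -/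
lemma coercive {N : ℕ} (hN : 2 ≤ N) (L : Matrix (Fin N) (Fin N) ℝ) (hLs : Lᵀ = L)
    (hL1 : L *ᵥ (fun _ => (1 : ℝ)) = 0) (lam2 : ℝ) (hlam2 : 0 < lam2)
    (hfiedler : ∀ v : Fin N → ℝ, (∑ i, v i) = 0 →
      lam2 * (∑ i, v i ^ 2) ≤ v ⬝ᵥ (L *ᵥ v))
    (b : Fin N → Fin 3 → ℝ) (hb : ∀ i, b i ⬝ᵥ b i = 1) (κ γ α : ℝ) (hκ : 0 < κ)
    (hγ0 : 0 < γ) (hγ1 : γ < 1)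
    (hexc : ((N : ℝ)⁻¹ • (∑ i, (1 - vecMulVec (b i) (b i)))
        - (κ + γ) • (1 : Matrix (Fin 3) (Fin 3) ℝ)).PosDef)
    (hα : (κ + 1 / γ - 1) / lam2 < α) (x : Fin N → Fin 3 → ℝ) :
    κ * ∑ i, ∑ l, x i l ^ 2 ≤ ∑ i, projForm (b i) (x i)
      + α * ∑ l, (fun i => x i l) ⬝ᵥ (L *ᵥ (fun i => x i l)) := by
  have hN0 : (0 : ℝ) < N := by positivity
  have hγi : 1 < 1 / γ := by rw [lt_div_iff₀ hγ0]; linarith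
  have hα' : κ + 1 / γ - 1 < α * lam2 := by rwa [div_lt_iff₀ hlam2] at hα
  have hαpos : 0 < α := lt_trans (div_pos (by linarith) hlam2) hα
  -- the quadratic form of the matrix in the excitation condition
  have hform : ∀ v : Fin 3 → ℝ,
      v ⬝ᵥ (((N : ℝ)⁻¹ • (∑ i, (1 - vecMulVec (b i) (b i)))
        - (κ + γ) • (1 : Matrix (Fin 3) (Fin 3) ℝ)) *ᵥ v)
      = (N : ℝ)⁻¹ * (∑ i, projForm (b i) v) - (κ + γ) * (v ⬝ᵥ v) := by
    intro v
    simp only [sub_mulVec _ ((κ + γ) • _), smul_mulVec, sum_mulVec, dotProduct_sub v (_ • _),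
      dotProduct_smul, dotProduct_sum, projForm_eq, one_mulVec, smul_eq_mul]
  have hq : ∀ v : Fin 3 → ℝ, N * ((κ + γ) * (v ⬝ᵥ v)) ≤ ∑ i, projForm (b i) v := by
    intro v
    have h := hexc.posSemidef.dotProduct_mulVec_nonneg v
    rw [star_trivial, hform] at h
    have h2 := mul_le_mul_of_nonneg_left (sub_nonneg.1 h) hN0.le
    rwa [mul_inv_cancel_left₀ hN0.ne'] at h2
  have hle : ∀ v : Fin 3 → ℝ, ∑ i, projForm (b i) v ≤ N * (v ⬝ᵥ v) := by
    intro v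
    calc ∑ i, projForm (b i) v ≤ ∑ _i : Fin N, v ⬝ᵥ v :=
          Finset.sum_le_sum fun i _ => projForm_le (b i) v
      _ = _ := by simp
  have hκγ : κ + γ ≤ 1 := by
    have h := (hq (fun _ => 1)).trans (hle _)
    simp [dotProduct] at h
    nlinarith
  set u : Fin 3 → ℝ := fun l => (N : ℝ)⁻¹ * ∑ i, x i l with hu
  set w : Fin N → Fin 3 → ℝ := fun i => x i - u with hw
  have hxw : ∀ i, x i = u + w i := by intro i; simp [hw]
  have hwsum : ∀ l, ∑ i, w i l = 0 := by
    intro l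
    simp [hw, hu, Finset.sum_sub_distrib, mul_inv_cancel_left₀ hN0.ne']
  have hnorm : ∑ i, ∑ l, x i l ^ 2 = N * (u ⬝ᵥ u) + ∑ i, w i ⬝ᵥ w i := by
    have : ∀ i, ∑ l, x i l ^ 2 = u ⬝ᵥ u + w i ⬝ᵥ w i + 2 * (u ⬝ᵥ w i) := by
      intro i
      rw [hxw i]
      simp only [dotProduct, Fin.sum_univ_three, Pi.add_apply]
      ring
    have h0 : ∑ i, w i = 0 := by ext l; simpa using hwsum l
    have hcross : ∑ i, u ⬝ᵥ w i = 0 := by rw [← dotProduct_sum, h0, dotProduct_zero]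
    simp only [this, Finset.sum_add_distrib, ← Finset.mul_sum, hcross]
    simp
  have hLap : ∀ l, lam2 * ∑ i, w i l ^ 2 ≤ (fun i => x i l) ⬝ᵥ (L *ᵥ (fun i => x i l)) := by
    intro l
    have e : (fun i => x i l) = fun i => u l + w i l := by
      ext i; rw [hxw i]; rfl
    rw [e, laplacian_form_shift L hLs hL1]
    exact hfiedler _ (hwsum l)
  have hLap' : lam2 * ∑ i, w i ⬝ᵥ w i ≤ ∑ l, (fun i => x i l) ⬝ᵥ (L *ᵥ (fun i => x i l)) := by
    refine le_trans (le_of_eq ?_) (Finset.sum_le_sum fun l _ => hLap l)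
    rw [← Finset.mul_sum, Finset.sum_comm]
    simp [dotProduct, pow_two]
  have hproj : (1 - γ) * ∑ i, projForm (b i) u + (1 - 1 / γ) * ∑ i, projForm (b i) (w i)
      ≤ ∑ i, projForm (b i) (x i) := by
    rw [Finset.mul_sum, Finset.mul_sum, ← Finset.sum_add_distrib]
    refine Finset.sum_le_sum fun i _ => ?_
    rw [hxw i]
    exact projForm_add_ge _ _ _ (hb i) γ hγ0
  have hpw : ∑ i, projForm (b i) (w i) ≤ ∑ i, w i ⬝ᵥ w i :=
    Finset.sum_le_sum fun i _ => projForm_le _ _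
  have hU : 0 ≤ u ⬝ᵥ u := Finset.sum_nonneg fun l _ => mul_self_nonneg (u l)
  have hW : 0 ≤ ∑ i, w i ⬝ᵥ w i :=
    Finset.sum_nonneg fun i _ => Finset.sum_nonneg fun l _ => mul_self_nonneg (w i l)
  rw [hnorm]
  have h1 := mul_le_mul_of_nonneg_left (hq u) (by linarith : 0 ≤ 1 - γ)
  have h2 : κ * (N * (u ⬝ᵥ u)) ≤ (1 - γ) * (N * ((κ + γ) * (u ⬝ᵥ u))) := by
    nlinarith [mul_nonneg (mul_nonneg hγ0.le (sub_nonneg.2 hκγ)) (mul_nonneg hN0.le hU)]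
  have h3 := mul_le_mul_of_nonneg_left hpw (by linarith : 0 ≤ 1 / γ - 1)
  have h4 := mul_le_mul_of_nonneg_left hLap' hαpos.le
  have h5 := mul_le_mul_of_nonneg_right hα'.le hW
  nlinarith

lemma exp_decay (V V' : ℝ → ℝ) (t₀ μ : ℝ) (hV : ∀ t, HasDerivAt V (V' t) t)
    (hle : ∀ t, t₀ ≤ t → V' t ≤ -2 * μ * V t) (t : ℝ) (ht : t₀ ≤ t) :
    V t ≤ Real.exp (-2 * μ * (t - t₀)) * V t₀ := by
  have hW : ∀ s, HasDerivAt (fun s => Real.exp (2 * μ * (s - t₀)) * V s)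
      (Real.exp (2 * μ * (s - t₀)) * (2 * μ) * V s + Real.exp (2 * μ * (s - t₀)) * V' s) s := by
    intro s
    have h1 : HasDerivAt (fun s => 2 * μ * (s - t₀)) (2 * μ) s := by
      simpa using ((hasDerivAt_id s).sub_const t₀).const_mul (2 * μ)
    exact h1.exp.mul (hV s)
  have hanti : AntitoneOn (fun s => Real.exp (2 * μ * (s - t₀)) * V s) (Set.Ici t₀) := by
    refine antitoneOn_of_deriv_nonpos (convex_Ici _)
      (fun s _ => (hW s).continuousAt.continuousWithinAt)
      (fun s _ => (hW s).differentiableAt.differentiableWithinAt) fun s hs => ?_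
    rw [(hW s).deriv]
    rw [interior_Ici] at hs
    nlinarith [mul_le_mul_of_nonneg_left (hle s (le_of_lt hs)) (Real.exp_pos (2 * μ * (s - t₀))).le]
  have h := hanti Set.self_mem_Ici ht ht
  simp only [sub_self, mul_zero, Real.exp_zero, one_mul] at h
  have h2 := mul_le_mul_of_nonneg_left h (Real.exp_pos (-2 * μ * (t - t₀))).le
  rwa [← mul_assoc, ← Real.exp_add, show -2 * μ * (t - t₀) + 2 * μ * (t - t₀) = 0 by ring,
    Real.exp_zero, one_mul] at h2

/-- the `M = 2` practical example of the paper: distributed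
bearing-only estimation of position and velocity of a constant-velocity target,
a consequence of Corollary 1 of the paper. -/
theorem constant_velocity_target_bearing_observer (N : ℕ) (hN : 2 ≤ N)
    (a : Fin N → Fin N → ℝ) (ha_symm : ∀ i j, a i j = a j i)
    (ha_nonneg : ∀ i j, 0 ≤ a i j) (ha_diag : ∀ i, a i i = 0)
    (L : Matrix (Fin N) (Fin N) ℝ)
    (hL : ∀ i j, L i j = if i = j then ∑ l, a i l else -(a i j))
    (hLpsd : L.PosSemidef) (hL1 : L *ᵥ (fun _ => (1 : ℝ)) = 0)
    (lam2 : ℝ) (hlam2 : 0 < lam2)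
    (hfiedler : ∀ v : Fin N → ℝ, (∑ i, v i) = 0 →
      lam2 * (∑ i, v i ^ 2) ≤ v ⬝ᵥ (L *ᵥ v))
    (t₀ : ℝ)
    -- constant-velocity target and continuous agent positions
    (pT : ℝ → Fin 3 → ℝ) (vT : Fin 3 → ℝ)
    (hpT : ∀ t, HasDerivAt pT vT t)
    (p : Fin N → ℝ → Fin 3 → ℝ)
    (hp_cont : ∀ i, Continuous (p i))
    (hp_ne : ∀ (i : Fin N) (t : ℝ), t₀ ≤ t → p i t ≠ pT t)
    -- bearings and associated orthogonal projection matrices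
    (b : Fin N → ℝ → Fin 3 → ℝ)
    (hb : ∀ i t l, b i t l =
      (pT t l - p i t l) / Real.sqrt (∑ l', (pT t l' - p i t l') ^ 2))
    (Pr : Fin N → ℝ → Matrix (Fin 3) (Fin 3) ℝ)
    (hPr : ∀ i t, Pr i t = 1 - Matrix.vecMulVec (b i t) (b i t))
    -- the distributed observer
    (k₁ k₂ α : ℝ) (hk₁ : 0 < k₁) (hk₂ : 0 < k₂)
    (phat vhat : Fin N → ℝ → Fin 3 → ℝ)
    (dlt : Fin N → ℝ → Fin 3 → ℝ)
    (hdlt : ∀ i t, dlt i t = (Pr i t) *ᵥ (p i t - phat i t)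
      - α • ∑ j, a i j • (phat i t - phat j t))
    (hobs_p : ∀ (i : Fin N) (t : ℝ), HasDerivAt (fun s => phat i s)
      (vhat i t + k₁ • dlt i t) t)
    (hobs_v : ∀ (i : Fin N) (t : ℝ), HasDerivAt (fun s => vhat i s)
      (k₂ • dlt i t) t)
    -- spatial excitation and consensus-gain conditions
    (δ γ : ℝ) (hδ : 0 < δ) (hγ0 : 0 < γ) (hγ1 : γ < 1)
    (hexc : ∀ t, t₀ ≤ t →
      (((N : ℝ))⁻¹ • (∑ i, Pr i t)
        - ((δ * k₁ + k₂) / k₁ ^ 2 + γ) • (1 : Matrix (Fin 3) (Fin 3) ℝ)).PosDef)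
    (hα : ((δ * k₁ + k₂) / k₁ ^ 2 + 1 / γ - 1) / lam2 < α) :
    ∃ c > (0 : ℝ), ∃ lam > (0 : ℝ), ∀ t, t₀ ≤ t →
      (∑ i : Fin N, ((∑ l : Fin 3, (pT t l - phat i t l) ^ 2)
          + (∑ l : Fin 3, (vT l - vhat i t l) ^ 2)))
        ≤ c * Real.exp (-2 * lam * (t - t₀)) *
          (∑ i : Fin N, ((∑ l : Fin 3, (pT t₀ l - phat i t₀ l) ^ 2)
            + (∑ l : Fin 3, (vT l - vhat i t₀ l) ^ 2))) := by
  set κ : ℝ := (δ * k₁ + k₂) / k₁ ^ 2 with hκdef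
  have hκ : 0 < κ := by positivity
  set r : ℝ := k₂ / k₁ with hr
  have hr0 : 0 < r := by positivity
  have hk₁κ : k₁ * κ = δ + r := by rw [hκdef, hr]; field_simp
  have hk₂r : k₂ = r * k₁ := by rw [hr]; field_simp
  have hLs : Lᵀ = L := by
    have h := hLpsd.isHermitian
    rwa [IsHermitian, conjTranspose_eq_transpose_of_trivial] at h
  obtain ⟨x, hx⟩ : ∃ x : Fin N → ℝ → Fin 3 → ℝ, ∀ i t l, x i t l = pT t l - phat i t l :=
    ⟨fun i t l => pT t l - phat i t l, fun _ _ _ => rfl⟩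
  obtain ⟨y, hy⟩ : ∃ y : Fin N → ℝ → Fin 3 → ℝ, ∀ i t l, y i t l = vT l - vhat i t l :=
    ⟨fun i t l => vT l - vhat i t l, fun _ _ _ => rfl⟩
  simp only [← hx, ← hy]
  -- the bearings are unit vectors and the projections annihilate `pT - p i`
  have hs : ∀ i t, t₀ ≤ t → 0 < ∑ l, (pT t l - p i t l) ^ 2 := by
    intro i t ht
    obtain ⟨l, hl⟩ := Function.ne_iff.1 (hp_ne i t ht)
    exact Finset.sum_pos' (fun _ _ => sq_nonneg _)
      ⟨l, Finset.mem_univ l, by have := sub_ne_zero.2 hl.symm; positivity⟩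
  have hbu : ∀ i t, t₀ ≤ t → b i t ⬝ᵥ b i t = 1 := by
    intro i t ht
    have h := hs i t ht
    have h2 := Real.sq_sqrt h.le
    have h3 := Real.sqrt_pos.2 h
    simp only [dotProduct, hb]
    simp_rw [div_mul_div_comm, ← pow_two, h2, ← Finset.sum_div]
    exact div_self h.ne'
  have hbs : ∀ i t, t₀ ≤ t → pT t - p i t = Real.sqrt (∑ l, (pT t l - p i t l) ^ 2) • b i t := by
    intro i t ht
    have h3 := Real.sqrt_pos.2 (hs i t ht)
    ext l
    simp only [Pi.sub_apply, Pi.smul_apply, smul_eq_mul, hb]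
    field_simp
  have hann : ∀ i t, t₀ ≤ t → Pr i t *ᵥ (p i t - phat i t) = Pr i t *ᵥ x i t := by
    intro i t ht
    have e : x i t = (p i t - phat i t) + (pT t - p i t) := by ext l; simp [hx]
    have e2 : Pr i t *ᵥ b i t = 0 := by
      rw [hPr, sub_mulVec, one_mulVec, vecMulVec_mulVec, hbu i t ht]
      simp
    rw [e, mulVec_add, hbs i t ht, mulVec_smul, e2, smul_zero, add_zero]
  have hLap : ∀ i t l, (L *ᵥ (fun j => x j t l)) i = ∑ j, a i j * (x i t l - x j t l) := by
    intro i t l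
    have : ∀ j, L i j * x j t l
        = (if i = j then (∑ m, a i m) * x j t l else 0) - a i j * x j t l := by
      intro j
      rw [hL]
      split_ifs with h
      · subst h; simp [ha_diag]
      · ring
    simp only [mulVec, dotProduct, this, Finset.sum_sub_distrib, mul_sub]
    simp [Finset.sum_mul]
  have hd : ∀ i t l, t₀ ≤ t →
      dlt i t l = (Pr i t *ᵥ x i t) l + α * (L *ᵥ (fun j => x j t l)) i := by
    intro i t l ht
    rw [hdlt, hann i t ht, hLap]
    simp only [Pi.sub_apply, Pi.smul_apply, Finset.sum_apply, smul_eq_mul, hx]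
    rw [sub_eq_add_neg, ← mul_neg, ← Finset.sum_neg_distrib]
    congr 2
    refine Finset.sum_congr rfl fun j _ => ?_
    ring
  have hco : ∀ t, t₀ ≤ t → κ * ∑ i, ∑ l, x i t l ^ 2 ≤ ∑ i, ∑ l, x i t l * dlt i t l := by
    intro t ht
    have h := hexc t ht
    simp only [hPr] at h
    refine (coercive hN L hLs hL1 lam2 hlam2 hfiedler (fun i => b i t) (fun i => hbu i t ht)
      κ γ α hκ hγ0 hγ1 h hα (fun i => x i t)).trans (le_of_eq ?_)
    simp only [hd _ _ _ ht, mul_add, Finset.sum_add_distrib, ← projForm_eq, ← hPr]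
    congr 1
    rw [Finset.sum_comm, Finset.mul_sum]
    refine Finset.sum_congr rfl fun l _ => ?_
    simp only [dotProduct, Finset.mul_sum]
    refine Finset.sum_congr rfl fun i _ => ?_
    ring
  have hx' : ∀ i t l, HasDerivAt (fun s => x i s l) (y i t l - k₁ * dlt i t l) t := by
    intro i t l
    simp only [hx, hy]
    refine ((hasDerivAt_pi.1 (hpT t) l).sub (hasDerivAt_pi.1 (hobs_p i t) l)).congr_deriv ?_
    simp only [Pi.add_apply, Pi.smul_apply, smul_eq_mul]
    ring
  have hy' : ∀ i t l, HasDerivAt (fun s => y i s l) (-(k₂ * dlt i t l)) t := by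
    intro i t l
    simp only [hy]
    refine ((hasDerivAt_const t (vT l)).sub (hasDerivAt_pi.1 (hobs_v i t) l)).congr_deriv ?_
    simp only [Pi.smul_apply, smul_eq_mul]
    ring
  set V : ℝ → ℝ := fun t => ∑ i, ∑ l, (x i t l ^ 2 + (y i t l - r * x i t l) ^ 2 / r ^ 2) with hVdef
  set V' : ℝ → ℝ := fun t => ∑ i, ∑ l, (2 * r * x i t l ^ 2 - 2 * k₁ * (x i t l * dlt i t l)
    - 2 / r * (y i t l - r * x i t l) ^ 2) with hV'def
  have hV : ∀ t, HasDerivAt V (V' t) t := by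
    intro t
    refine HasDerivAt.fun_sum fun i _ => HasDerivAt.fun_sum fun l _ => ?_
    refine (((hx' i t l).pow 2).add
      ((((hy' i t l).sub ((hx' i t l).const_mul r)).pow 2).div_const (r ^ 2))).congr_deriv ?_
    simp only [hk₂r, Pi.sub_apply]
    field_simp
    ring
  have hmδ : min δ r ≤ δ := min_le_left _ _
  have hmr : min δ r ≤ r := min_le_right _ _
  have hVle : ∀ t, t₀ ≤ t → V' t ≤ -2 * min δ r * V t := by
    intro t ht
    have h := mul_le_mul_of_nonneg_left (hco t ht) (by positivity : 0 ≤ 2 * k₁)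
    have hX : 0 ≤ ∑ i, ∑ l, x i t l ^ 2 := by positivity
    have hZ : 0 ≤ ∑ i, ∑ l, (y i t l - r * x i t l) ^ 2 := by positivity
    have e1 : V' t = 2 * r * (∑ i, ∑ l, x i t l ^ 2)
        - 2 * k₁ * (∑ i, ∑ l, x i t l * dlt i t l)
        - 2 / r * ∑ i, ∑ l, (y i t l - r * x i t l) ^ 2 := by
      simp only [hV'def, Finset.sum_sub_distrib, Finset.mul_sum]
    have e2 : V t = (∑ i, ∑ l, x i t l ^ 2)
        + (∑ i, ∑ l, (y i t l - r * x i t l) ^ 2) / r ^ 2 := by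
      simp only [hVdef, Finset.sum_add_distrib, Finset.sum_div]
    rw [e1, e2]
    generalize (∑ i, ∑ l, x i t l ^ 2) = X at *
    generalize (∑ i, ∑ l, (y i t l - r * x i t l) ^ 2) = Z at *
    have h1 : 2 * k₁ * (κ * X) = 2 * (δ + r) * X := by rw [← hk₁κ]; ring
    have h2 := mul_le_mul_of_nonneg_right hmδ hX
    have h3 := mul_le_mul_of_nonneg_right hmr (by positivity : 0 ≤ Z / r ^ 2)
    have h4 : r * (Z / r ^ 2) = 1 / r * Z := by field_simp
    have h5 : 2 / r * Z = 2 * (1 / r * Z) := by ring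
    nlinarith
  -- `V` is equivalent to the squared error
  have hup : ∀ t, V t ≤ (3 + 2 / r ^ 2) * ∑ i, ((∑ l, x i t l ^ 2) + ∑ l, y i t l ^ 2) := by
    intro t
    simp only [hVdef, ← Finset.sum_add_distrib, Finset.mul_sum]
    refine Finset.sum_le_sum fun i _ => Finset.sum_le_sum fun l _ => ?_
    have e : (3 + 2 / r ^ 2) * (x i t l ^ 2 + y i t l ^ 2)
        = x i t l ^ 2 + (y i t l - r * x i t l) ^ 2 / r ^ 2
          + ((y i t l + r * x i t l) ^ 2 / r ^ 2 + 3 * y i t l ^ 2 + 2 / r ^ 2 * x i t l ^ 2) := by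
      field_simp; ring
    rw [e]
    exact le_add_of_nonneg_right (by positivity)
  have hlow : ∀ t, ∑ i, ((∑ l, x i t l ^ 2) + ∑ l, y i t l ^ 2) ≤ (1 + 2 * r ^ 2) * V t := by
    intro t
    simp only [hVdef, ← Finset.sum_add_distrib, Finset.mul_sum]
    refine Finset.sum_le_sum fun i _ => Finset.sum_le_sum fun l _ => ?_
    have e : (1 + 2 * r ^ 2) * (x i t l ^ 2 + (y i t l - r * x i t l) ^ 2 / r ^ 2)
        = x i t l ^ 2 + y i t l ^ 2
          + ((y i t l - 2 * (r * x i t l)) ^ 2 + (y i t l - r * x i t l) ^ 2 / r ^ 2) := by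
      field_simp; ring
    rw [e]
    exact le_add_of_nonneg_right (by positivity)
  refine ⟨(1 + 2 * r ^ 2) * (3 + 2 / r ^ 2), by positivity, min δ r, lt_min hδ hr0, fun t ht => ?_⟩
  have hdec := exp_decay V V' t₀ (min δ r) hV hVle t ht
  calc _ ≤ (1 + 2 * r ^ 2) * V t := hlow t
    _ ≤ (1 + 2 * r ^ 2) * (Real.exp (-2 * min δ r * (t - t₀)) * V t₀) := by gcongr
    _ ≤ (1 + 2 * r ^ 2) * (Real.exp (-2 * min δ r * (t - t₀)) *
        ((3 + 2 / r ^ 2) * ∑ i, ((∑ l, x i t₀ l ^ 2) + ∑ l, y i t₀ l ^ 2))) := by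
      gcongr
      exact hup t₀
    _ = _ := by ring
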